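/- Fix t > 0 with t ≠ 2 and x ∈ ℝ, and let F_n(x) = Φ(g_n)^{n} − (1 − Φ(g_n))^{n} where g_n = (c_n x + d_n)^{1/t}, defined for n large enough that c_n x + d_n > 0. Then lim_{n→∞} b_n² ( F_n(x) − Λ(x) ) = Λ(x) e^{−x} ( 1 + x + ((2−t)/2) x² ). -/

import Mathlib

open Real Filter Topology

/-- The standard normal distribution function. -/
noncomputable def stdNormalCDF (x : ℝ) : ℝ :=
  ∫ u in Set.Iic x, Real.exp (-u ^ 2 / 2) / Real.sqrt (2 * Real.pi)

/-- The Gumbel distribution function `Λ(x) = exp(−e^{−x})`. -/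
noncomputable def gumbel (x : ℝ) : ℝ := Real.exp (-Real.exp (-x))

/-!
Write `φ` for the standard normal density. The equation defining `b_n` says `n = b_n / φ(b_n)`, so
with `g = g_n`, `b = b_n` and the Mills ratio expansion `1 - Φ(g) = φ(g)/g · (1 - g⁻² + o(g⁻²))`,
`n (1 - Φ(g)) = exp(-((g² - b²)/2 + log(g/b))) · (1 - b⁻² + o(b⁻²))`.
Since `g = b (1 + t x / b²)^(1/t)`, the second-order binomial expansion shows that the exponent is
`x + (x + (2 - t)/2 · x²) b⁻² + o(b⁻²)`. Hence `n (1 - Φ(g))` tends to `exp(-x)` with an explicit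
error of order `b⁻²`, which the Poisson approximation `(1 - q)^n ≈ exp(-n q)` carries over to
`Φ(g)^n`; the term `(1 - Φ(g))^n` is negligible.
-/

open MeasureTheory ProbabilityTheory Asymptotics
open scoped NNReal

local notation "φ" => gaussianPDFReal 0 1

section Rates

variable {α : Type*} {l : Filter α} {s v : α → ℝ} {a L : ℝ}

lemma tendsto_of_tendsto_mul_sub (hs : Tendsto s l atTop)
    (hv : Tendsto (fun i => s i * (v i - a)) l (𝓝 L)) : Tendsto v l (𝓝 a) := by
  have hsub : Tendsto (fun i => v i - a) l (𝓝 0) := by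
    refine (hv.div_atTop hs).congr' ?_
    filter_upwards [hs.eventually_ne_atTop 0] with i hi using mul_div_cancel_left₀ _ hi
  simpa only [sub_add_cancel, zero_add] using hsub.add_const a

lemma tendsto_mul_sub_of_hasDerivAt {f : ℝ → ℝ} {f' : ℝ} (hf : HasDerivAt f f' a)
    (hs : Tendsto s l atTop) (hv : Tendsto (fun i => s i * (v i - a)) l (𝓝 L)) :
    Tendsto (fun i => s i * (f (v i) - f a)) l (𝓝 (f' * L)) := by
  have hsub : Tendsto (fun i => v i - a) l (𝓝 0) := by
    simpa only [sub_self] using (tendsto_of_tendsto_mul_sub hs hv).sub_const a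
  simpa [mul_comm L] using hf.hasFDerivAt.hasFDerivWithinAt.lim hsub
    (Eventually.of_forall fun _ => Set.mem_univ _) hv

end Rates

section PoissonApproximation

lemma isBigO_log_one_sub_add_self :
    (fun q : ℝ => Real.log (1 - q) + q) =O[𝓝 0] fun q => q ^ 2 := by
  refine IsBigO.of_bound 2 ?_
  filter_upwards [Metric.ball_mem_nhds (0 : ℝ) one_half_pos] with q hq
  have hq : |q| < 1 / 2 := by simpa using hq
  have hlog := abs_log_sub_add_sum_range_le (hq.trans one_half_lt_one) 1
  simp only [Finset.range_one, Finset.sum_singleton, Nat.cast_zero, zero_add, pow_one, div_one,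
    one_add_one_eq_two] at hlog
  rw [norm_eq_abs, norm_eq_abs, abs_pow, add_comm]
  refine hlog.trans ((div_le_iff₀ (by linarith)).2 ?_)
  nlinarith [sq_nonneg |q|]

variable {s q : ℕ → ℝ} {τ κ : ℝ}

lemma tendsto_mul_of_tendsto_nat_mul (hsn : Tendsto (fun n => s n / n) atTop (𝓝 0))
    (hq : Tendsto (fun n => n * q n) atTop (𝓝 τ)) : Tendsto (fun n => s n * q n) atTop (𝓝 0) := by
  rw [← zero_mul τ]
  refine (hsn.mul hq).congr' ?_
  filter_upwards [eventually_ne_atTop 0] with n hn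
  field_simp

lemma tendsto_mul_pow_self (hs : Tendsto s atTop atTop)
    (hsq : Tendsto (fun n => s n * q n) atTop (𝓝 0)) :
    Tendsto (fun n => s n * q n ^ n) atTop (𝓝 0) := by
  have hq : Tendsto q atTop (𝓝 0) := tendsto_of_tendsto_mul_sub hs (by simpa using hsq)
  refine squeeze_zero_norm' ?_ (by simpa using hsq.abs)
  filter_upwards [hq.abs.eventually_lt_const (by simp : |(0 : ℝ)| < 1), eventually_ne_atTop 0]
    with n hqn hn
  simp only [norm_eq_abs, abs_mul, abs_pow]
  gcongr
  exact pow_le_of_le_one (abs_nonneg _) hqn.le hn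

lemma tendsto_mul_one_sub_pow_sub_exp (hs : Tendsto s atTop atTop)
    (hsn : Tendsto (fun n => s n / n) atTop (𝓝 0))
    (h : Tendsto (fun n => s n * (n * q n - τ)) atTop (𝓝 κ)) :
    Tendsto (fun n => s n * ((1 - q n) ^ n - Real.exp (-τ))) atTop
      (𝓝 (-(Real.exp (-τ) * κ))) := by
  have hnq : Tendsto (fun n => n * q n) atTop (𝓝 τ) := tendsto_of_tendsto_mul_sub hs h
  have hsq := tendsto_mul_of_tendsto_nat_mul hsn hnq
  have hq : Tendsto q atTop (𝓝 0) := tendsto_of_tendsto_mul_sub hs (by simpa using hsq)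
  have hremainder : Tendsto (fun n => s n * n * (Real.log (1 - q n) + q n)) atTop (𝓝 0) := by
    refine ((isBigO_refl (fun n => s n * n) atTop).mul
      (isBigO_log_one_sub_add_self.comp_tendsto hq)).trans_tendsto ?_
    rw [← zero_mul τ]
    exact (hsq.mul hnq).congr fun n => by simp only [Function.comp_apply]; ring
  have hexponent : Tendsto (fun n => s n * (n * Real.log (1 - q n) - -τ)) atTop (𝓝 (-κ)) := by
    simpa only [zero_sub] using (hremainder.sub h).congr fun n => by ring
  have hexp := tendsto_mul_sub_of_hasDerivAt (Real.hasDerivAt_exp (-τ)) hs hexponent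
  rw [mul_neg] at hexp
  refine hexp.congr' ?_
  filter_upwards [hq.eventually_lt_const one_pos] with n hn
  rw [Real.exp_nat_mul, Real.exp_log (sub_pos.2 hn)]

end PoissonApproximation

section Gaussian

lemma hasDerivAt_gaussianPDFReal (μ : ℝ) (v : ℝ≥0) (x : ℝ) :
    HasDerivAt (gaussianPDFReal μ v) (-((x - μ) / v) * gaussianPDFReal μ v x) x := by
  have hexponent : HasDerivAt (fun y : ℝ => -(y - μ) ^ 2 / (2 * v)) (-((x - μ) / v)) x := by
    refine ((((hasDerivAt_id x).sub_const μ).pow 2).neg.div_const (2 * (v : ℝ))).congr_deriv ?_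
    simp only [id, Nat.cast_ofNat, mul_one, pow_one, Nat.add_one_sub_one]
    rw [← mul_neg, mul_div_mul_left _ _ two_ne_zero, neg_div]
  rw [gaussianPDFReal_def]
  exact (hexponent.exp.const_mul _).congr_deriv (by ring)

lemma tendsto_pow_mul_gaussianPDFReal_atTop {v : ℝ≥0} (hv : v ≠ 0) (k : ℕ) :
    Tendsto (fun x => x ^ k * gaussianPDFReal 0 v x) atTop (𝓝 0) := by
  have hdecay := ((tendsto_rpow_abs_mul_exp_neg_mul_sq_cocompact (a := (2 * (v : ℝ))⁻¹)
    (by positivity) k).mono_left atTop_le_cocompact).const_mul (√(2 * π * v))⁻¹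
  rw [mul_zero] at hdecay
  refine hdecay.congr' ?_
  filter_upwards [eventually_ge_atTop 0] with x hx
  rw [gaussianPDFReal, abs_of_nonneg hx, rpow_natCast, sub_zero, neg_div, div_eq_inv_mul, neg_mul]
  ring

lemma div_gaussianPDFReal_eq (x : ℝ) : x / φ x = √(2 * π) * x * Real.exp (x ^ 2 / 2) := by
  simp only [gaussianPDFReal, NNReal.coe_one, mul_one, sub_zero, neg_div, Real.exp_neg]
  field_simp

lemma div_gaussianPDFReal_mul_gaussianPDFReal_div {a b : ℝ} (ha : 0 < a) (hb : 0 < b) :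
    b / φ b * (φ a / a) = Real.exp (-((a ^ 2 - b ^ 2) / 2 + Real.log (a / b))) := by
  rw [neg_add, Real.exp_add, Real.exp_neg (Real.log _), Real.exp_log (by positivity), sub_div,
    neg_sub, Real.exp_sub, div_gaussianPDFReal_eq, ← inv_div a, div_gaussianPDFReal_eq]
  field_simp

lemma stdNormalCDF_eq_integral (x : ℝ) : stdNormalCDF x = ∫ u in Set.Iic x, φ u := by
  simp [stdNormalCDF, gaussianPDFReal, div_eq_inv_mul]

lemma hasDerivAt_integral_Iic {E : Type*} [NormedAddCommGroup E] [NormedSpace ℝ E]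
    [CompleteSpace E] {f : ℝ → E} {x : ℝ} (hint : Integrable f) (hcont : ContinuousAt f x) :
    HasDerivAt (fun y => ∫ u in Set.Iic y, f u) (f x) x := by
  have hderiv : HasDerivAt (fun y => ∫ u in (0 : ℝ)..y, f u) (f x) x :=
    intervalIntegral.integral_hasDerivAt_right hint.intervalIntegrable
      hint.aestronglyMeasurable.stronglyMeasurableAtFilter hcont
  refine (hderiv.const_add (∫ u in Set.Iic 0, f u)).congr_of_eventuallyEq
    (Eventually.of_forall fun y => ?_)
  dsimp only
  rw [← intervalIntegral.integral_Iic_sub_Iic hint.integrableOn hint.integrableOn,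
    add_sub_cancel]

lemma hasDerivAt_stdNormalCDF (x : ℝ) : HasDerivAt stdNormalCDF (φ x) x := by
  rw [funext stdNormalCDF_eq_integral]
  exact hasDerivAt_integral_Iic (integrable_gaussianPDFReal 0 1)
    (hasDerivAt_gaussianPDFReal 0 1 x).continuousAt

lemma tendsto_stdNormalCDF_atTop : Tendsto stdNormalCDF atTop (𝓝 1) := by
  rw [funext stdNormalCDF_eq_integral, ← integral_gaussianPDFReal_eq_one 0 one_ne_zero]
  exact (aecover_Iic tendsto_id).integral_tendsto_of_countably_generated
    (integrable_gaussianPDFReal 0 1)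

lemma hasDerivAt_gaussianPDFReal_div_pow (k : ℕ) {x : ℝ} (hx : x ≠ 0) :
    HasDerivAt (fun y => φ y / y ^ (k + 1)) (-(φ x / x ^ k) - (k + 1) * (φ x / x ^ (k + 2))) x := by
  refine ((hasDerivAt_gaussianPDFReal 0 1 x).div (hasDerivAt_pow (k + 1) x)
    (pow_ne_zero _ hx)).congr_deriv ?_
  push_cast
  field_simp
  ring_nf

lemma tendsto_gaussianPDFReal_div_pow_atTop (k : ℕ) :
    Tendsto (fun x => φ x / x ^ (k + 1)) atTop (𝓝 0) := by
  simpa using (tendsto_pow_mul_gaussianPDFReal_atTop one_ne_zero 0).div_atTop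
    (tendsto_pow_atTop k.succ_ne_zero)

lemma tendsto_mills_remainder_div :
    Tendsto (fun x => (φ x / x - (1 - stdNormalCDF x)) / (φ x / x ^ 3)) atTop (𝓝 1) := by
  have hpos (x : ℝ) : 0 < φ x := gaussianPDFReal_pos 0 1 x one_ne_zero
  refine HasDerivAt.lhopital_zero_atTop_on_Ioi (a := 0) (f' := fun x => -(φ x / x ^ 2))
    (g' := fun x => -(φ x / x ^ 2) - 3 * (φ x / x ^ 4)) ?_ ?_ ?_ ?_ ?_ ?_
  · intro x hx
    have hquotient := hasDerivAt_gaussianPDFReal_div_pow 0 hx.ne'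
    simp only [zero_add, pow_one, pow_zero, div_one, Nat.cast_zero, one_mul] at hquotient
    exact (hquotient.sub ((hasDerivAt_stdNormalCDF x).const_sub 1)).congr_deriv (by ring)
  · intro x hx
    refine (hasDerivAt_gaussianPDFReal_div_pow 2 hx.ne').congr_deriv ?_
    norm_num
  · intro x hx
    have hx : 0 < x := hx
    have hsq := div_pos (hpos x) (pow_pos hx 2)
    have hquartic := div_pos (hpos x) (pow_pos hx 4)
    linarith
  · simpa using (tendsto_gaussianPDFReal_div_pow_atTop 0).sub
      (tendsto_stdNormalCDF_atTop.const_sub 1)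
  · exact tendsto_gaussianPDFReal_div_pow_atTop 2
  · have hratio : Tendsto (fun x : ℝ => (1 + 3 / x ^ 2)⁻¹) atTop (𝓝 1) := by
      simpa using ((tendsto_const_nhds.div_atTop (tendsto_pow_atTop two_ne_zero)).const_add
        (1 : ℝ)).inv₀ (by norm_num)
    refine hratio.congr' ?_
    filter_upwards [eventually_gt_atTop 0] with x hx
    have hφ := (hpos x).ne'
    have hdenominator : -(φ x / x ^ 2) - 3 * (φ x / x ^ 4) = -(φ x / x ^ 2) * (1 + 3 / x ^ 2) := by
      field_simp
      ring
    rw [hdenominator, div_mul_cancel_left₀ (by simp [hx.ne', hφ])]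

lemma tendsto_sq_mul_one_sub_mills :
    Tendsto (fun x => x ^ 2 * (1 - x * (1 - stdNormalCDF x) / φ x)) atTop (𝓝 1) := by
  refine tendsto_mills_remainder_div.congr' ?_
  filter_upwards [eventually_gt_atTop 0] with x hx
  have hφ := (gaussianPDFReal_pos 0 1 x one_ne_zero).ne'
  field_simp

end Gaussian

section Binomial

lemma isBigO_one_add_rpow_sub_quadratic (p : ℝ) :
    (fun u : ℝ => (1 + u) ^ p - (1 + p * u + p * (p - 1) / 2 * u ^ 2)) =O[𝓝 0] fun u => u ^ 3 := by
  have htaylor := (one_add_rpow_hasFPowerSeriesAt_zero (a := p)).isBigO_sub_partialSum_pow 3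
  refine (htaylor.congr_left fun u => ?_).trans (isBigO_of_le _ fun u => by simp)
  have hchoose : Ring.choose p 2 = p * (p - 1) / 2 := by
    simp only [Ring.choose_eq_smul, Nat.factorial_two, Nat.cast_ofNat, descPochhammer_succ_right,
      descPochhammer_zero, Nat.cast_zero, sub_zero, one_mul, Nat.cast_one, Polynomial.smeval_mul,
      Polynomial.smeval_X, pow_one, Polynomial.smeval_sub, Polynomial.smeval_one, pow_zero,
      one_smul, smul_eq_mul]
    ring
  simp only [zero_add, FormalMultilinearSeries.partialSum, binomialSeries,
    FormalMultilinearSeries.apply_eq_prod_smul_coeff, Finset.prod_const, Finset.card_univ,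
    Fintype.card_fin, FormalMultilinearSeries.coeff_ofScalars, smul_eq_mul, Finset.sum_range_succ,
    Finset.range_one, Finset.sum_singleton, pow_zero, Ring.choose_zero_right, mul_one, pow_one,
    Ring.choose_one_right, hchoose]
  ring

lemma tendsto_mul_one_add_div_rpow_sub (k p : ℝ) :
    Tendsto (fun s : ℝ => s * (s * ((1 + k / s) ^ p - 1) - p * k)) atTop
      (𝓝 (p * (p - 1) / 2 * k ^ 2)) := by
  have hk : Tendsto (fun s : ℝ => k / s) atTop (𝓝 0) := tendsto_const_nhds.div_atTop tendsto_id
  have hcubic : Tendsto (fun s : ℝ => s ^ 2 * (k / s) ^ 3) atTop (𝓝 0) := by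
    rw [← mul_zero (k ^ 2)]
    refine (hk.const_mul (k ^ 2)).congr' ?_
    filter_upwards [eventually_ne_atTop 0] with s hs
    field_simp
  have hremainder := ((isBigO_refl (fun s : ℝ => s ^ 2) atTop).mul
    ((isBigO_one_add_rpow_sub_quadratic p).comp_tendsto hk)).trans_tendsto hcubic
  rw [← zero_add (p * (p - 1) / 2 * k ^ 2)]
  refine (hremainder.add_const _).congr' ?_
  filter_upwards [eventually_ne_atTop 0] with s hs
  simp only [Function.comp_apply]
  field_simp
  ring

lemma tendsto_one_add_div_rpow (k p : ℝ) : Tendsto (fun s : ℝ => (1 + k / s) ^ p) atTop (𝓝 1) := by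
  have hk : Tendsto (fun s : ℝ => k / s) atTop (𝓝 0) := tendsto_const_nhds.div_atTop tendsto_id
  simpa using (hk.const_add 1).rpow_const (p := p) (by simp)

end Binomial

section PoweredLevel

/-- The level `(c x + d)^(1/t)` for the normalising constants `c = t β^(t-2)` and `d = β^t`: the
argument of `Φ` in the distribution of the `t`-th powers of normal extremes, with `β` in place
of `b_n`. -/
noncomputable def poweredLevel (t x β : ℝ) : ℝ := (t * β ^ (t - 2) * x + β ^ t) ^ (1 / t)

variable {t : ℝ}

lemma poweredLevel_eq_mul_rpow (ht : t ≠ 0) {x β : ℝ} (hβ : 0 < β) (hw : 0 < 1 + t * x / β ^ 2) :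
    poweredLevel t x β = β * (1 + t * x / β ^ 2) ^ (1 / t) := by
  have hfactor : t * β ^ (t - 2) * x + β ^ t = β ^ t * (1 + t * x / β ^ 2) := by
    rw [Real.rpow_sub hβ, Real.rpow_two]
    ring
  rw [poweredLevel, hfactor, Real.mul_rpow (by positivity) hw.le, ← Real.rpow_mul hβ.le,
    mul_one_div_cancel ht, Real.rpow_one]

lemma eventually_poweredLevel_eq (ht : t ≠ 0) (x : ℝ) :
    ∀ᶠ β in atTop, 0 < β ∧ 0 < 1 + t * x / β ^ 2 ∧
      poweredLevel t x β = β * (1 + t * x / β ^ 2) ^ (1 / t) := by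
  have hw : Tendsto (fun β : ℝ => 1 + t * x / β ^ 2) atTop (𝓝 1) := by
    simpa using (tendsto_const_nhds.div_atTop (tendsto_pow_atTop two_ne_zero)).const_add (1 : ℝ)
  filter_upwards [eventually_gt_atTop 0, hw.eventually_const_lt one_pos] with β hβ hwβ
    using ⟨hβ, hwβ, poweredLevel_eq_mul_rpow ht hβ hwβ⟩

lemma tendsto_poweredLevel_div (ht : t ≠ 0) (x : ℝ) :
    Tendsto (fun β => poweredLevel t x β / β) atTop (𝓝 1) := by
  refine ((tendsto_one_add_div_rpow (t * x) (1 / t)).comp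
    (tendsto_pow_atTop (α := ℝ) two_ne_zero)).congr' ?_
  filter_upwards [eventually_poweredLevel_eq ht x] with β ⟨hβ, _, hlevel⟩
  rw [hlevel, mul_div_cancel_left₀ _ hβ.ne', Function.comp_apply]

lemma tendsto_poweredLevel_atTop (ht : t ≠ 0) (x : ℝ) :
    Tendsto (poweredLevel t x) atTop atTop := by
  refine (tendsto_id.atTop_mul_pos one_pos (tendsto_poweredLevel_div ht x)).congr' ?_
  filter_upwards [eventually_ne_atTop 0] with β hβ using mul_div_cancel₀ _ hβ

lemma tendsto_sq_mul_log_poweredLevel_div (ht : t ≠ 0) (x : ℝ) :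
    Tendsto (fun β => β ^ 2 * Real.log (poweredLevel t x β / β)) atTop (𝓝 x) := by
  have hsq : Tendsto (fun β : ℝ => β ^ 2) atTop atTop := tendsto_pow_atTop two_ne_zero
  have hlinear : Tendsto (fun β : ℝ => β ^ 2 * ((1 + t * x / β ^ 2) - 1)) atTop (𝓝 (t * x)) := by
    refine tendsto_const_nhds.congr' ?_
    filter_upwards [eventually_ne_atTop 0] with β hβ
    field_simp
    ring
  have hlog := (tendsto_mul_sub_of_hasDerivAt (Real.hasDerivAt_log one_ne_zero) hsq
    hlinear).div_const t
  rw [inv_one, one_mul, mul_div_cancel_left₀ _ ht] at hlog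
  refine hlog.congr' ?_
  filter_upwards [eventually_poweredLevel_eq ht x] with β ⟨hβ, hw, hlevel⟩
  rw [hlevel, mul_div_cancel_left₀ _ hβ.ne', Real.log_rpow hw, Real.log_one]
  ring

lemma tendsto_sq_mul_poweredLevel_sq_sub (ht : t ≠ 0) (x : ℝ) :
    Tendsto (fun β => β ^ 2 * ((poweredLevel t x β ^ 2 - β ^ 2) / 2 - x)) atTop
      (𝓝 ((2 - t) / 2 * x ^ 2)) := by
  have hsq : Tendsto (fun β : ℝ => β ^ 2) atTop atTop := tendsto_pow_atTop two_ne_zero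
  have hbinomial := ((tendsto_mul_one_add_div_rpow_sub (t * x) (2 / t)).comp hsq).div_const 2
  have hlimit : 2 / t * (2 / t - 1) / 2 * (t * x) ^ 2 / 2 = (2 - t) / 2 * x ^ 2 := by field_simp
  rw [hlimit] at hbinomial
  refine hbinomial.congr' ?_
  filter_upwards [eventually_poweredLevel_eq ht x] with β ⟨_, hw, hlevel⟩
  have hlevel_sq : poweredLevel t x β ^ 2 = β ^ 2 * (1 + t * x / β ^ 2) ^ (2 / t) := by
    rw [hlevel, mul_pow, ← Real.rpow_mul_natCast hw.le, Nat.cast_two, one_div_mul_eq_div]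
  rw [hlevel_sq, Function.comp_apply]
  field_simp

lemma tendsto_sq_mul_density_ratio_sub_exp (ht : t ≠ 0) (x : ℝ) :
    Tendsto (fun β => β ^ 2 *
      (β / φ β * (φ (poweredLevel t x β) / poweredLevel t x β) - Real.exp (-x))) atTop
      (𝓝 (Real.exp (-x) * -((2 - t) / 2 * x ^ 2 + x))) := by
  have hexponent : Tendsto (fun β => β ^ 2 * (-((poweredLevel t x β ^ 2 - β ^ 2) / 2
      + Real.log (poweredLevel t x β / β)) - -x)) atTop (𝓝 (-((2 - t) / 2 * x ^ 2 + x))) :=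
    ((tendsto_sq_mul_poweredLevel_sq_sub ht x).add
      (tendsto_sq_mul_log_poweredLevel_div ht x)).neg.congr fun β => by ring
  refine (tendsto_mul_sub_of_hasDerivAt (Real.hasDerivAt_exp (-x))
    (tendsto_pow_atTop two_ne_zero) hexponent).congr' ?_
  filter_upwards [eventually_gt_atTop 0,
    (tendsto_poweredLevel_atTop ht x).eventually_gt_atTop 0] with β hβ hlevel
  rw [div_gaussianPDFReal_mul_gaussianPDFReal_div hlevel hβ]

lemma tendsto_sq_mul_one_sub_mills_poweredLevel (ht : t ≠ 0) (x : ℝ) :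
    Tendsto (fun β => β ^ 2 * (1 - poweredLevel t x β *
      (1 - stdNormalCDF (poweredLevel t x β)) / φ (poweredLevel t x β))) atTop (𝓝 1) := by
  have hlevel := tendsto_poweredLevel_atTop ht x
  have hproduct := (((tendsto_poweredLevel_div ht x).pow 2).inv₀ (by norm_num)).mul
    (tendsto_sq_mul_one_sub_mills.comp hlevel)
  rw [one_pow, inv_one, one_mul] at hproduct
  refine hproduct.congr' ?_
  filter_upwards [eventually_ne_atTop 0, hlevel.eventually_ne_atTop 0] with β hβ hne
  rw [Function.comp_apply, ← mul_assoc]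
  congr 1
  field_simp

lemma tendsto_sq_mul_tail_poweredLevel_sub_exp (ht : t ≠ 0) (x : ℝ) :
    Tendsto (fun β => β ^ 2 *
      (β / φ β * (1 - stdNormalCDF (poweredLevel t x β)) - Real.exp (-x))) atTop
      (𝓝 (-(Real.exp (-x) * (1 + x + (2 - t) / 2 * x ^ 2)))) := by
  have hratio := tendsto_sq_mul_density_ratio_sub_exp ht x
  have hratio_limit := tendsto_of_tendsto_mul_sub (tendsto_pow_atTop two_ne_zero) hratio
  have hsum := hratio.sub (hratio_limit.mul (tendsto_sq_mul_one_sub_mills_poweredLevel ht x))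
  have hlimit : Real.exp (-x) * -((2 - t) / 2 * x ^ 2 + x) - Real.exp (-x) * 1 =
      -(Real.exp (-x) * (1 + x + (2 - t) / 2 * x ^ 2)) := by ring
  rw [hlimit] at hsum
  refine hsum.congr' ?_
  filter_upwards [(tendsto_poweredLevel_atTop ht x).eventually_ne_atTop 0] with β hlevel
  have hφ := (gaussianPDFReal_pos 0 1 (poweredLevel t x β) one_ne_zero).ne'
  field_simp
  ring

end PoweredLevel

section Scale

variable {b : ℕ → ℝ}

lemma tendsto_atTop_of_two_pi_mul_sq_mul_exp_sq_eq
    (hb : ∀ n : ℕ, 1 ≤ n → 0 < b n ∧ 2 * π * b n ^ 2 * Real.exp (b n ^ 2) = (n : ℝ) ^ 2) :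
    Tendsto b atTop atTop := by
  have hsq : Tendsto (fun n : ℕ => (n : ℝ) ^ 2) atTop atTop :=
    (tendsto_pow_atTop two_ne_zero).comp tendsto_natCast_atTop_atTop
  refine tendsto_atTop.2 fun M => ?_
  filter_upwards [hsq.eventually_gt_atTop (2 * π * M ^ 2 * Real.exp (M ^ 2)),
    eventually_ge_atTop 1] with n hn hn1
  obtain ⟨hpos, heq⟩ := hb n hn1
  by_contra! hlt
  rw [← heq] at hn
  exact hn.not_ge (by gcongr)

lemma div_gaussianPDFReal_eq_natCast {β : ℝ} {n : ℕ} (hβ : 0 ≤ β)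
    (h : 2 * π * β ^ 2 * Real.exp (β ^ 2) = (n : ℝ) ^ 2) : β / φ β = n := by
  rw [div_gaussianPDFReal_eq, ← sq_eq_sq₀ (by positivity) (by positivity), mul_pow, mul_pow,
    Real.sq_sqrt (by positivity), ← h, ← Real.exp_nat_mul, Nat.cast_two,
    mul_div_cancel₀ _ two_ne_zero]

theorem powered_extremes_first_order_limit_t_ne_two_general
    (hb : ∀ n : ℕ, 1 ≤ n → 0 < b n ∧ 2 * π * b n ^ 2 * Real.exp (b n ^ 2) = (n : ℝ) ^ 2)
    {t : ℝ} (ht : t ≠ 0) (x : ℝ) :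
    Tendsto (fun n => b n ^ 2 * (stdNormalCDF (poweredLevel t x (b n)) ^ n -
      (1 - stdNormalCDF (poweredLevel t x (b n))) ^ n - gumbel x)) atTop
      (𝓝 (gumbel x * Real.exp (-x) * (1 + x + (2 - t) / 2 * x ^ 2))) := by
  have hbtop := tendsto_atTop_of_two_pi_mul_sq_mul_exp_sq_eq hb
  have hscale : Tendsto (fun n => b n ^ 2) atTop atTop :=
    (tendsto_pow_atTop two_ne_zero).comp hbtop
  have hn : ∀ᶠ n : ℕ in atTop, b n / φ (b n) = n := by
    filter_upwards [eventually_ge_atTop 1] with n hn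
      using div_gaussianPDFReal_eq_natCast (hb n hn).1.le (hb n hn).2
  have hscale_div : Tendsto (fun n => b n ^ 2 / n) atTop (𝓝 0) := by
    refine ((tendsto_pow_mul_gaussianPDFReal_atTop one_ne_zero 1).comp hbtop).congr' ?_
    filter_upwards [hn, hbtop.eventually_ne_atTop 0] with n hn hb0
    rw [← hn, Function.comp_apply]
    field_simp
  have htail : Tendsto (fun n =>
      b n ^ 2 * (n * (1 - stdNormalCDF (poweredLevel t x (b n))) - Real.exp (-x))) atTop
      (𝓝 (-(Real.exp (-x) * (1 + x + (2 - t) / 2 * x ^ 2)))) :=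
    ((tendsto_sq_mul_tail_poweredLevel_sub_exp ht x).comp hbtop).congr'
      (hn.mono fun n hn => by rw [Function.comp_apply, hn])
  have htail_limit := tendsto_of_tendsto_mul_sub hscale htail
  have hpow := tendsto_mul_one_sub_pow_sub_exp hscale hscale_div htail
  have hnegligible := tendsto_mul_pow_self hscale
    (tendsto_mul_of_tendsto_nat_mul hscale_div htail_limit)
  have hsum := hpow.sub hnegligible
  rw [← gumbel, sub_zero, mul_neg, neg_neg, ← mul_assoc] at hsum
  refine hsum.congr fun n => ?_
  rw [sub_sub_cancel]
  ring

end Scale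

/-- Hall's first-order result, `t ≠ 2`: With `b_n` the unique positive
solution of `2π b_n² exp(b_n²) = n²`, `c_n = t b_n^{t−2}`, `d_n = b_n^t`
(for `t > 0`, `t ≠ 2`), `g_n = (c_n x + d_n)^{1/t}` and
`F_n(x) = Φ(g_n)^n − (1 − Φ(g_n))^n`:
`lim_{n→∞} b_n² (F_n(x) − Λ(x)) = Λ(x) e^{−x} (1 + x + ((2−t)/2)x²)`. -/
theorem powered_extremes_first_order_limit_t_ne_two
    (b : ℕ → ℝ)
    (hb : ∀ n : ℕ, 1 ≤ n → 0 < b n ∧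
      2 * Real.pi * (b n) ^ 2 * Real.exp ((b n) ^ 2) = (n : ℝ) ^ 2)
    (t : ℝ) (ht : 0 < t) (ht2 : t ≠ 2) (x : ℝ)
    (c d g F : ℕ → ℝ)
    (hc : ∀ n : ℕ, c n = t * b n ^ (t - 2))
    (hd : ∀ n : ℕ, d n = b n ^ t)
    (hg : ∀ n : ℕ, g n = (c n * x + d n) ^ (1 / t))
    (hF : ∀ n : ℕ, F n = stdNormalCDF (g n) ^ n - (1 - stdNormalCDF (g n)) ^ n) :
    Tendsto (fun n : ℕ => (b n) ^ 2 * (F n - gumbel x)) atTop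
      (𝓝 (gumbel x * Real.exp (-x) * (1 + x + (2 - t) / 2 * x ^ 2))) := by
  simpa only [hF, hg, hc, hd, poweredLevel] using
    powered_extremes_first_order_limit_t_ne_two_general hb ht.ne' x
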